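/- Let B be a finite set and let (B'_i)_{i ∈ ι} be a nonempty finite family of pairwise distinct nonempty proper subsets of B that are pairwise disjoint (B'_i ∩ B'_j = ∅ for all i ≠ j). Give each B'_i the simple basic belief assignment with weight a_i = |B'_i|/|B|, let m be the Dempster combination over the frame B, and let Bel be its credibility function. Then the set of indices i maximizing Bel(B'_i) equals the set of indices i maximizing the cardinality |B'_i|. (Hence in this disjoint case the credibility-based revision operator CSRG selects exactly the same maximal consistent subbases as the cardinality-based operator RSRG, and they lead to the same revision result.) -/

import Mathlib

open Finset

/-- The intersection `⋂_{i ∈ S} B'_i` taken within the frame `Θ`, with the convention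
that the empty intersection (`S = ∅`) is the whole frame `Θ`. -/
def interS {α ι : Type*} [DecidableEq α] (Θ : Finset α) (B : ι → Finset α)
    (S : Finset ι) : Finset α :=
  Θ.filter (fun x => ∀ i ∈ S, x ∈ B i)

/-- The conjunctive weight `Π_{i ∈ S} a_i · Π_{i ∉ S} (1 − a_i)` of a subfamily `S` when
combining the simple BBAs with focal sets `B'_i` and weights `a_i`. -/
def weight {ι : Type*} [Fintype ι] [DecidableEq ι] (a : ι → ℝ) (S : Finset ι) : ℝ :=
  (∏ i ∈ S, a i) * ∏ i ∈ Finset.univ \ S, (1 - a i)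

/-- The total conflict `k` of the conjunctive combination of the simple BBAs with focal
sets `B'_i ⊆ Θ` and weights `a_i`: the total weight of the subfamilies with empty
intersection. -/
def totalConflict {α ι : Type*} [DecidableEq α] [Fintype ι] [DecidableEq ι]
    (Θ : Finset α) (B : ι → Finset α) (a : ι → ℝ) : ℝ :=
  ∑ S ∈ (Finset.univ : Finset ι).powerset,
    if interS Θ B S = ∅ then weight a S else 0

/-- The Dempster combination of the simple BBAs with focal sets `B'_i ⊆ Θ` and weights
`a_i`: `m(X) = (1−k)⁻¹ · Σ_{S : ⋂_{i ∈ S} B'_i = X} Π_{i ∈ S} a_i · Π_{i ∉ S} (1 − a_i)`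
for `X ≠ ∅`, and `m(∅) = 0`. -/
noncomputable def dempsterCombo {α ι : Type*} [DecidableEq α] [Fintype ι] [DecidableEq ι]
    (Θ : Finset α) (B : ι → Finset α) (a : ι → ℝ) (X : Finset α) : ℝ :=
  if X = ∅ then 0 else
    (1 - totalConflict Θ B a)⁻¹ *
      ∑ S ∈ (Finset.univ : Finset ι).powerset,
        if interS Θ B S = X then weight a S else 0

/-- The credibility (belief) function of a basic belief assignment `m`:
`Bel(A) = Σ_{X ⊆ A, X ≠ ∅} m(X)`. -/
noncomputable def credibility {α : Type*} [DecidableEq α] (m : Finset α → ℝ)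
    (A : Finset α) : ℝ :=
  ∑ X ∈ A.powerset.filter (fun X => X ≠ ∅), m X

/-- The weights of all subfamilies sum to one. -/
lemma sum_weight {ι : Type*} [Fintype ι] [DecidableEq ι] (a : ι → ℝ) :
    ∑ S ∈ (Finset.univ : Finset ι).powerset, weight a S = 1 := by
  simpa [weight] using (Finset.prod_add a (fun i => 1 - a i) Finset.univ).symm

lemma weight_nonneg {ι : Type*} [Fintype ι] [DecidableEq ι] {a : ι → ℝ}
    (h0 : ∀ i, 0 ≤ a i) (h1 : ∀ i, a i ≤ 1) (S : Finset ι) : 0 ≤ weight a S :=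
  mul_nonneg (Finset.prod_nonneg fun i _ => h0 i)
    (Finset.prod_nonneg fun i _ => sub_nonneg.2 (h1 i))

/-- Over a nonempty frame, the conflict of simple BBAs with weights in `[0, 1)` is not total. -/
lemma totalConflict_lt_one {α ι : Type*} [DecidableEq α] [Fintype ι] [DecidableEq ι]
    {Θ : Finset α} (hΘ : Θ.Nonempty) (B : ι → Finset α) {a : ι → ℝ}
    (h0 : ∀ i, 0 ≤ a i) (h1 : ∀ i, a i < 1) : totalConflict Θ B a < 1 := by
  rw [← sum_weight a, totalConflict]
  refine Finset.sum_lt_sum (fun S _ => ?_) ⟨∅, by simp, ?_⟩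
  · split_ifs
    · exact le_rfl
    · exact weight_nonneg h0 (fun i => (h1 i).le) S
  · have hpos : 0 < weight a ∅ := by
      simpa [weight] using Finset.prod_pos fun i _ => sub_pos.2 (h1 i)
    simpa [interS, hΘ.ne_empty] using hpos

/-- The credibility of `A` is the normalized total weight of the subfamilies whose
intersection is nonempty and contained in `A`. -/
lemma credibility_dempsterCombo {α ι : Type*} [DecidableEq α] [Fintype ι] [DecidableEq ι]
    (Θ : Finset α) (B : ι → Finset α) (a : ι → ℝ) (A : Finset α) :
    credibility (dempsterCombo Θ B a) A = (1 - totalConflict Θ B a)⁻¹ *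
      ∑ S ∈ (Finset.univ : Finset ι).powerset,
        if interS Θ B S ⊆ A ∧ interS Θ B S ≠ ∅ then weight a S else 0 := by
  have hm : ∀ X ∈ A.powerset.filter (fun X => X ≠ ∅), dempsterCombo Θ B a X =
      (1 - totalConflict Θ B a)⁻¹ * ∑ S ∈ (Finset.univ : Finset ι).powerset,
        if interS Θ B S = X then weight a S else 0 :=
    fun X hX => if_neg (Finset.mem_filter.1 hX).2
  rw [credibility, Finset.sum_congr rfl hm, ← Finset.mul_sum, Finset.sum_comm]
  simp only [Finset.sum_ite_eq, Finset.mem_filter, Finset.mem_powerset]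

/-- For pairwise disjoint nonempty proper subsets of the frame, only the subfamily `{i}`
contributes to the credibility of the `i`-th set. -/
lemma interS_subset_and_ne_empty_iff {α ι : Type*} [DecidableEq α] {Θ : Finset α}
    {B : ι → Finset α} (hne : ∀ i, (B i).Nonempty) (hproper : ∀ i, B i ⊂ Θ)
    (hdisj : ∀ i j, i ≠ j → B i ∩ B j = ∅) (i : ι) (S : Finset ι) :
    interS Θ B S ⊆ B i ∧ interS Θ B S ≠ ∅ ↔ S = {i} := by
  have index_eq : ∀ {x j k}, x ∈ B j → x ∈ B k → j = k := fun {x j k} hj hk => by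
    by_contra hjk
    simpa [hdisj j k hjk] using Finset.mem_inter.2 ⟨hj, hk⟩
  constructor
  · rintro ⟨hsub, hnonempty⟩
    obtain ⟨x, hx⟩ := Finset.nonempty_iff_ne_empty.2 hnonempty
    have hS : ∀ j ∈ S, j = i := fun j hj =>
      index_eq ((Finset.mem_filter.1 hx).2 j hj) (hsub hx)
    refine (Finset.subset_singleton_iff.1 fun j hj =>
      Finset.mem_singleton.2 (hS j hj)).resolve_left ?_
    rintro rfl
    exact (hproper i).2 (by simpa [interS] using hsub)
  · rintro rfl
    have hB : interS Θ B {i} = B i := by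
      ext x
      simpa [interS] using fun hx => (hproper i).1 hx
    rw [hB]
    exact ⟨Finset.Subset.rfl, (hne i).ne_empty⟩

/-- The weight of a singleton subfamily, with the factor `1 - a_i` cleared. -/
lemma one_sub_mul_weight_singleton {ι : Type*} [Fintype ι] [DecidableEq ι] (a : ι → ℝ)
    (i : ι) : (1 - a i) * weight a {i} = a i * ∏ j, (1 - a j) := by
  rw [← Finset.mul_prod_erase Finset.univ (fun j => 1 - a j) (Finset.mem_univ i), weight,
    Finset.prod_singleton, Finset.sdiff_singleton_eq_erase]
  ring

lemma weight_singleton_le_iff {ι : Type*} [Fintype ι] [DecidableEq ι] {a : ι → ℝ}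
    (h1 : ∀ i, a i < 1) (i j : ι) : weight a {j} ≤ weight a {i} ↔ a j ≤ a i := by
  have hP : 0 < ∏ l, (1 - a l) := Finset.prod_pos fun l _ => sub_pos.2 (h1 l)
  have hw : ∀ l, weight a {l} = a l / (1 - a l) * ∏ k, (1 - a k) := fun l => by
    have hl := sub_pos.2 (h1 l)
    rw [div_mul_eq_mul_div, eq_div_iff hl.ne', ← one_sub_mul_weight_singleton, mul_comm]
  rw [hw, hw, mul_le_mul_iff_left₀ hP, div_le_div_iff₀ (sub_pos.2 (h1 j)) (sub_pos.2 (h1 i))]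
  constructor <;> intro h <;> linarith

/-- If the nonempty proper subbases `B'_i ⊊ B` are pairwise distinct and pairwise
disjoint, and each carries the simple BBA with weight `a_i = |B'_i|/|B|`, then for the
credibility function `Bel` of their Dempster combination, the indices maximizing
`Bel(B'_i)` are exactly the indices maximizing the cardinality `|B'_i|` (so CSRG and
RSRG select the same subbases and lead to the same revision result). -/
theorem argmax_credibility_eq_argmax_card_of_disjoint
    {α ι : Type*} [DecidableEq α] [Fintype ι] [DecidableEq ι] [Nonempty ι]
    (B : Finset α) (B' : ι → Finset α)
    (hne : ∀ i, (B' i).Nonempty) (hproper : ∀ i, B' i ⊂ B)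
    (hdistinct : ∀ i j, i ≠ j → B' i ≠ B' j)
    (hdisj : ∀ i j, i ≠ j → B' i ∩ B' j = ∅)
    (a : ι → ℝ) (ha : ∀ i, a i = ((B' i).card : ℝ) / (B.card : ℝ)) :
    {i : ι | ∀ j : ι, credibility (dempsterCombo B B' a) (B' j) ≤
        credibility (dempsterCombo B B' a) (B' i)} =
      {i : ι | ∀ j : ι, (B' j).card ≤ (B' i).card} := by
  have hB : B.Nonempty := (hne (Classical.arbitrary ι)).mono (hproper _).1
  have hcard : (0 : ℝ) < B.card := by exact_mod_cast hB.card_pos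
  have h0 : ∀ i, 0 ≤ a i := fun i => by rw [ha]; positivity
  have h1 : ∀ i, a i < 1 := fun i => by
    rw [ha, div_lt_one hcard]
    exact_mod_cast Finset.card_lt_card (hproper i)
  have hk : 0 < (1 - totalConflict B B' a)⁻¹ :=
    inv_pos.2 (sub_pos.2 (totalConflict_lt_one hB B' h0 h1))
  have hBel : ∀ i, credibility (dempsterCombo B B' a) (B' i) =
      (1 - totalConflict B B' a)⁻¹ * weight a {i} := fun i => by
    simp [credibility_dempsterCombo, interS_subset_and_ne_empty_iff hne hproper hdisj]
  ext i
  refine forall_congr' fun j => ?_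
  rw [hBel, hBel, mul_le_mul_iff_right₀ hk, weight_singleton_le_iff h1, ha, ha,
    div_le_div_iff_of_pos_right hcard, Nat.cast_le]
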